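/- For every l ≥ 1, the set A_l := A_{l-1} + K_l is a closed *-subalgebra (a C*-subalgebra) of B(H), and A_{l-1} is a closed two-sided ideal of A_l. -/

import Mathlib

/-!
Write `K_p` for the closed `*`-algebra generated by the `e p i j`. Each level `e p` is a system of
nonzero matrix units (`isMatrixUnits_zero`, `isMatrixUnits_succ`), so `K_p` is their closed span
(`Kset_eq`), and likewise `A_0`, the compact operators, equals `K_0`
(`isCompactOperator_iff_mem_unitSpan`). A unit of level `q ≤ p` times a unit of level `p` is a unit
of level `q` or zero, and it is nonzero for only one row index at level `p` (`IsTower.exists_mul_add`).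
Hence `K_q K_p ⊆ K_q`, and by taking adjoints `K_p K_q ⊆ K_q`; this makes
`A_l = K_0 + ⋯ + K_l` a `*`-algebra with `A_{l-1}` as a two-sided ideal.

The analytic point is that `A_l + K_{l+1}` is closed, which follows from `‖x‖ ≤ ‖x + a‖` for
`x ∈ K_{l+1}` and `a ∈ A_l` (`IsTower.norm_le`). By density let `x` be a finite combination
`∑ c i j • e (l+1) i j`, and put `P m = ∑ i, e l (n i m) (n i m)`, the sum running over the finitely
many indices that occur. Then `x * P m = ∑ c i j • e l (n i m) (n j m)` has the same coefficients
with respect to another system of matrix units, hence the same norm as `x`, as injective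
`*`-homomorphisms out of a matrix algebra are isometric (`IsMatrixUnits.norm_sum_eq`). On the other
hand `a * P m → 0`, because `a * e l c c → 0` as `c → ∞` for every `a ∈ A_l`
(`IsTower.unitSpan_le_decay`), and `‖P m‖ ≤ 1`.
-/

open Filter

open Pointwise

/-- The closed `*`-subalgebra of `B(H)` generated by `{e_{ij}^p : i, j}`. -/
noncomputable def Kset {H : Type*} [NormedAddCommGroup H] [InnerProductSpace ℂ H]
    [CompleteSpace H] (e : ℕ → ℕ → ℕ → (H →L[ℂ] H)) (p : ℕ) : Set (H →L[ℂ] H) :=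
  closure ((NonUnitalStarAlgebra.adjoin ℂ {T : H →L[ℂ] H | ∃ i j, T = e p i j} :
    NonUnitalStarSubalgebra ℂ (H →L[ℂ] H)) : Set (H →L[ℂ] H))

/-- `A_0 = K(H)` and `A_p = A_{p-1} + K_p`. -/
noncomputable def Aset {H : Type*} [NormedAddCommGroup H] [InnerProductSpace ℂ H]
    [CompleteSpace H] (e : ℕ → ℕ → ℕ → (H →L[ℂ] H)) : ℕ → Set (H →L[ℂ] H)
  | 0 => {T : H →L[ℂ] H | IsCompactOperator ⇑T}
  | (l + 1) => Aset e l + Kset e (l + 1)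

/-! ### Matrix units -/

section MatrixUnits

open scoped ComplexOrder

variable {H : Type*} [NormedAddCommGroup H] [InnerProductSpace ℂ H] [CompleteSpace H]

/-- A family of nonzero operators `E i j` on `H` satisfying the relations of matrix units. -/
structure IsMatrixUnits {ι : Type*} [DecidableEq ι] (E : ι → ι → (H →L[ℂ] H)) : Prop where
  mul : ∀ i j k l, E i j * E k l = if j = k then E i l else 0
  star_eq : ∀ i j, star (E i j) = E j i
  ne_zero : ∀ i j, E i j ≠ 0

/-- The `*`-homomorphism from the C⋆-algebra of `ι × ι` matrices to `B(H)` given by a finite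
system of matrix units. -/
noncomputable def IsMatrixUnits.hom {ι : Type*} [DecidableEq ι] [Fintype ι]
    {E : ι → ι → (H →L[ℂ] H)} (hE : IsMatrixUnits E) :
    CStarMatrix ι ι ℂ →⋆ₙₐ[ℂ] (H →L[ℂ] H) where
  toFun c := ∑ i, ∑ j, c i j • E i j
  map_smul' r c := by
    simp [Finset.smul_sum, mul_smul]
  map_zero' := by simp
  map_add' c d := by
    simp [add_smul, Finset.sum_add_distrib]
  map_mul' c d := by
    have key : ∀ i k, ∑ j, ∑ l, (c i j • E i j) * (d k l • E k l)
        = ∑ l, (c i k * d k l) • E i l := by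
      intro i k
      rw [Finset.sum_eq_single k]
      · refine Finset.sum_congr rfl fun l _ => ?_
        rw [smul_mul_smul_comm, hE.mul, if_pos rfl]
      · intro j _ hj
        refine Finset.sum_eq_zero fun l _ => ?_
        rw [smul_mul_smul_comm, hE.mul, if_neg hj, smul_zero]
      · simp
    calc ∑ i, ∑ l, (c * d) i l • E i l
        = ∑ i, ∑ l, ∑ k, (c i k * d k l) • E i l := by
          simp [CStarMatrix.mul_apply, Finset.sum_smul]
      _ = ∑ i, ∑ k, ∑ l, (c i k * d k l) • E i l :=
          Finset.sum_congr rfl fun i _ => Finset.sum_comm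
      _ = ∑ i, ∑ k, ∑ j, ∑ l, (c i j • E i j) * (d k l • E k l) := by
          simp_rw [key]
      _ = (∑ i, ∑ j, c i j • E i j) * ∑ k, ∑ l, d k l • E k l := by
          simp_rw [Finset.sum_mul, Finset.mul_sum]
          exact Finset.sum_congr rfl fun i _ => Finset.sum_comm
  map_star' c := by
    simp only [star_sum, star_smul, hE.star_eq]
    rw [Finset.sum_comm]
    simp [CStarMatrix.star_apply]

lemma IsMatrixUnits.hom_apply {ι : Type*} [DecidableEq ι] [Fintype ι]
    {E : ι → ι → (H →L[ℂ] H)} (hE : IsMatrixUnits E) (c : CStarMatrix ι ι ℂ) :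
    hE.hom c = ∑ i, ∑ j, c i j • E i j := rfl

lemma IsMatrixUnits.hom_injective {ι : Type*} [DecidableEq ι] [Fintype ι]
    {E : ι → ι → (H →L[ℂ] H)} (hE : IsMatrixUnits E) : Function.Injective hE.hom := by
  rw [injective_iff_map_eq_zero]
  intro c hc
  refine CStarMatrix.ext fun i j => ?_
  have h : E i i * hE.hom c * E j j = c i j • E i j := by
    rw [hE.hom_apply, Finset.mul_sum, Finset.sum_mul, Finset.sum_eq_single i]
    · rw [Finset.mul_sum, Finset.sum_mul, Finset.sum_eq_single j]
      · simp [hE.mul]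
      · intro k _ hk
        simp [hE.mul, hk]
      · simp
    · intro k _ hk
      simp [Finset.mul_sum, hE.mul, hk.symm]
    · simp
  rw [hc, mul_zero, zero_mul] at h
  simpa [hE.ne_zero i j] using h.symm

/-- The norm of a linear combination of matrix units depends only on the coefficients, because
injective `*`-homomorphisms of C⋆-algebras are isometric. -/
lemma IsMatrixUnits.norm_sum_eq {ι : Type*} [DecidableEq ι] [Fintype ι]
    {E F : ι → ι → (H →L[ℂ] H)} (hE : IsMatrixUnits E) (hF : IsMatrixUnits F) (c : ι → ι → ℂ) :
    ‖∑ i, ∑ j, c i j • E i j‖ = ‖∑ i, ∑ j, c i j • F i j‖ := by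
  have h1 := NonUnitalStarAlgHom.norm_map hE.hom hE.hom_injective (CStarMatrix.ofMatrix c)
  have h2 := NonUnitalStarAlgHom.norm_map hF.hom hF.hom_injective (CStarMatrix.ofMatrix c)
  exact h1.trans h2.symm

lemma IsMatrixUnits.norm_sum_diag_le {ι : Type*} [DecidableEq ι]
    {E : ι → ι → (H →L[ℂ] H)} (hE : IsMatrixUnits E) (s : Finset ι) :
    ‖∑ i ∈ s, E i i‖ ≤ 1 := by
  refine IsStarProjection.norm_le _ ⟨?_, ?_⟩
  · change _ * _ = _
    rw [Finset.sum_mul_sum]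
    refine Finset.sum_congr rfl fun i hi => ?_
    simp [hE.mul, hi]
  · change star _ = _
    simp [hE.star_eq]

lemma IsMatrixUnits.comp_injective {ι κ : Type*} [DecidableEq ι] [DecidableEq κ]
    {E : ι → ι → (H →L[ℂ] H)} (hE : IsMatrixUnits E) {f : κ → ι} (hf : Function.Injective f) :
    IsMatrixUnits fun i j => E (f i) (f j) where
  mul i j k l := by simp [hE.mul, hf.eq_iff]
  star_eq i j := hE.star_eq _ _
  ne_zero i j := hE.ne_zero _ _

/-- The closed linear span of the operators `E i j`. -/
noncomputable def unitSpan (E : ℕ → ℕ → (H →L[ℂ] H)) : Submodule ℂ (H →L[ℂ] H) :=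
  (Submodule.span ℂ (Set.range fun q : ℕ × ℕ => E q.1 q.2)).topologicalClosure

lemma mem_unitSpan (E : ℕ → ℕ → (H →L[ℂ] H)) (i j : ℕ) : E i j ∈ unitSpan E :=
  Submodule.le_topologicalClosure _ (Submodule.subset_span ⟨(i, j), rfl⟩)

lemma isClosed_unitSpan (E : ℕ → ℕ → (H →L[ℂ] H)) :
    IsClosed (unitSpan E : Set (H →L[ℂ] H)) := Submodule.isClosed_topologicalClosure _

lemma unitSpan_le {E : ℕ → ℕ → (H →L[ℂ] H)} {S : Submodule ℂ (H →L[ℂ] H)}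
    (hS : IsClosed (S : Set (H →L[ℂ] H))) (h : ∀ i j, E i j ∈ S) : unitSpan E ≤ S := by
  refine Submodule.topologicalClosure_minimal _ (Submodule.span_le.2 ?_) hS
  rintro _ ⟨q, rfl⟩
  exact h _ _

lemma mul_mem_of_unitSpan {E F : ℕ → ℕ → (H →L[ℂ] H)} {S : Submodule ℂ (H →L[ℂ] H)}
    (hS : IsClosed (S : Set (H →L[ℂ] H))) (h : ∀ i j k l, E i j * F k l ∈ S)
    {x y : H →L[ℂ] H} (hx : x ∈ unitSpan E) (hy : y ∈ unitSpan F) : x * y ∈ S := by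
  have h1 : ∀ i j, E i j * y ∈ S := by
    intro i j
    have : unitSpan F ≤ S.comap (LinearMap.mulLeft ℂ (E i j)) :=
      unitSpan_le (hS.preimage (continuous_const_mul (E i j))) fun k l => h i j k l
    exact this hy
  have : unitSpan E ≤ S.comap (LinearMap.mulRight ℂ y) :=
    unitSpan_le (hS.preimage (continuous_mul_const y)) h1
  exact this hx

lemma IsMatrixUnits.mul_mem {E : ℕ → ℕ → (H →L[ℂ] H)} (hE : IsMatrixUnits E)
    {x y : H →L[ℂ] H} (hx : x ∈ unitSpan E) (hy : y ∈ unitSpan E) : x * y ∈ unitSpan E := by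
  refine mul_mem_of_unitSpan (isClosed_unitSpan E) (fun i j k l => ?_) hx hy
  rw [hE.mul]
  split_ifs
  · exact mem_unitSpan _ _ _
  · exact zero_mem _

lemma IsMatrixUnits.star_mem {E : ℕ → ℕ → (H →L[ℂ] H)} (hE : IsMatrixUnits E)
    {x : H →L[ℂ] H} (hx : x ∈ unitSpan E) : star x ∈ unitSpan E := by
  have : unitSpan E ≤ (unitSpan E).comap (starLinearEquiv ℂ (A := H →L[ℂ] H)).toLinearMap :=
    unitSpan_le ((isClosed_unitSpan E).preimage continuous_star) fun i j => by
      change star (E i j) ∈ unitSpan E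
      rw [hE.star_eq]
      exact mem_unitSpan _ _ _
  exact this hx

/-- Since matrix units span a `*`-algebra, the generated closed `*`-algebra is the closed span. -/
lemma Kset_eq {e : ℕ → ℕ → ℕ → (H →L[ℂ] H)} {p : ℕ} (hE : IsMatrixUnits (e p)) :
    Kset e p = unitSpan (e p) := by
  let S : NonUnitalStarSubalgebra ℂ (H →L[ℂ] H) :=
    { unitSpan (e p) with
      mul_mem' := hE.mul_mem
      star_mem' := hE.star_mem }
  apply Set.Subset.antisymm
  · refine closure_minimal ?_ (isClosed_unitSpan (e p))
    refine NonUnitalStarAlgebra.adjoin_le (S := S) ?_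
    rintro _ ⟨i, j, rfl⟩
    exact mem_unitSpan _ _ _
  · refine closure_mono ?_
    let T := NonUnitalStarAlgebra.adjoin ℂ {T : H →L[ℂ] H | ∃ i j, T = e p i j}
    change _ ≤ T.toNonUnitalSubalgebra.toSubmodule
    rw [Submodule.span_le]
    rintro _ ⟨q, rfl⟩
    exact NonUnitalStarAlgebra.subset_adjoin ℂ _ ⟨q.1, q.2, rfl⟩

end MatrixUnits

/-! ### Relations between the levels -/

open InnerProductSpace in
lemma e_zero_eq_rankOne {H : Type*} [NormedAddCommGroup H] [InnerProductSpace ℂ H]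
    (ξ : HilbertBasis ℕ ℂ H) {e : ℕ → ℕ → ℕ → (H →L[ℂ] H)}
    (h0 : ∀ i j k, e 0 i j (ξ k) = if k = j then ξ i else 0) (i j : ℕ) :
    e 0 i j = rankOne ℂ (ξ i) (ξ j) := by
  refine ContinuousLinearMap.ext_on (s := Set.range ξ) ?_ ?_
  · exact Submodule.dense_iff_topologicalClosure_eq_top.2 ξ.dense_span
  · rintro _ ⟨k, rfl⟩
    rw [h0, rankOne_apply, orthonormal_iff_ite.1 ξ.orthonormal]
    by_cases h : k = j
    · simp [h]
    · simp [h, Ne.symm h]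

section Tower

variable {H : Type*} [NormedAddCommGroup H] [InnerProductSpace ℂ H] [CompleteSpace H]

lemma isMatrixUnits_zero (ξ : HilbertBasis ℕ ℂ H) {e : ℕ → ℕ → ℕ → (H →L[ℂ] H)}
    (h0 : ∀ i j k, e 0 i j (ξ k) = if k = j then ξ i else 0) : IsMatrixUnits (e 0) where
  mul i j k l := by
    simp only [e_zero_eq_rankOne ξ h0]
    ext v
    rw [mul_apply_eq_comp, InnerProductSpace.rankOne_apply,
      InnerProductSpace.rankOne_apply, inner_smul_right, orthonormal_iff_ite.1 ξ.orthonormal]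
    split_ifs <;> simp
  star_eq i j := by
    simp [e_zero_eq_rankOne ξ h0, ContinuousLinearMap.star_eq_adjoint]
  ne_zero i j := by
    rw [e_zero_eq_rankOne ξ h0]
    exact InnerProductSpace.rankOne_ne_zero (ξ.orthonormal.ne_zero i) (ξ.orthonormal.ne_zero j)

/-- Multiplying a matrix unit of level `p` by one of level `p + 1` gives a matrix unit of level
`p` or zero: exactly one term of the series defining the latter can contribute. -/
lemma mul_succ {n : ℕ → ℕ → ℕ} (hmono : ∀ p, StrictMono (n p))
    (hdisj : ∀ p q, p ≠ q → ∀ k m, n p k ≠ n q m)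
    {e : ℕ → ℕ → ℕ → (H →L[ℂ] H)}
    (hrec : ∀ p i j, ∀ v : H, Filter.Tendsto
      (fun M => ∑ m ∈ Finset.range M, e p (n i m) (n j m) v)
      Filter.atTop (nhds (e (p + 1) i j v)))
    {p : ℕ} (hE : IsMatrixUnits (e p)) (i a m c b : ℕ) :
    e p i (n a m) * e (p + 1) c b = if a = c then e p i (n b m) else 0 := by
  ext v
  have h1 := ((e p i (n a m)).continuous.tendsto _).comp (hrec p c b v)
  refine tendsto_nhds_unique h1 (tendsto_const_nhds.congr' ?_)
  filter_upwards [Filter.eventually_gt_atTop m] with M hM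
  have hterm : ∀ m', e p i (n a m) (e p (n c m') (n b m') v)
      = if m' = m then (if a = c then e p i (n b m) else 0) v else 0 := by
    intro m'
    rw [← mul_apply_eq_comp, hE.mul]
    by_cases hac : a = c
    · subst hac
      by_cases hm : m' = m
      · simp [hm]
      · simp [hm, (hmono a).injective.eq_iff, Ne.symm hm]
    · simp [hac, hdisj a c hac m m']
  simp [hterm, hM]

lemma isMatrixUnits_succ {n : ℕ → ℕ → ℕ} (hmono : ∀ p, StrictMono (n p))
    (hdisj : ∀ p q, p ≠ q → ∀ k m, n p k ≠ n q m)
    {e : ℕ → ℕ → ℕ → (H →L[ℂ] H)}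
    (hrec : ∀ p i j, ∀ v : H, Filter.Tendsto
      (fun M => ∑ m ∈ Finset.range M, e p (n i m) (n j m) v)
      Filter.atTop (nhds (e (p + 1) i j v)))
    {p : ℕ} (hE : IsMatrixUnits (e p)) : IsMatrixUnits (e (p + 1)) where
  mul i j k l := by
    ext v
    refine tendsto_nhds_unique (hrec p i j (e (p + 1) k l v)) ?_
    simp only [← mul_apply_eq_comp, mul_succ hmono hdisj hrec hE]
    split_ifs
    · exact hrec p i l v
    · simp
  star_eq i j := by
    rw [ContinuousLinearMap.star_eq_adjoint, eq_comm, ContinuousLinearMap.eq_adjoint_iff]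
    intro v w
    have h1 := (hrec p j i v).inner (𝕜 := ℂ) (tendsto_const_nhds (x := w))
    have h2 := (tendsto_const_nhds (x := v)).inner (𝕜 := ℂ) (hrec p i j w)
    refine tendsto_nhds_unique h1 (h2.congr fun M => ?_)
    rw [sum_inner, inner_sum]
    refine Finset.sum_congr rfl fun m _ => ?_
    rw [← hE.star_eq, ContinuousLinearMap.star_eq_adjoint, ContinuousLinearMap.adjoint_inner_right]
  ne_zero i j h := by
    have := mul_succ hmono hdisj hrec hE (n i 0) i 0 i j
    rw [h, mul_zero, if_pos rfl] at this
    exact hE.ne_zero _ _ this.symm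

/-- The algebraic relations in the family `e p i j` from which the theorem follows. -/
structure IsTower (n : ℕ → ℕ → ℕ) (e : ℕ → ℕ → ℕ → (H →L[ℂ] H)) : Prop where
  units : ∀ p, IsMatrixUnits (e p)
  mul_succ : ∀ p i a m c b,
    e p i (n a m) * e (p + 1) c b = if a = c then e p i (n b m) else 0
  inj : ∀ p, Function.Injective (n p)
  disj : ∀ p q, p ≠ q → ∀ k m, n p k ≠ n q m
  cover : ∀ k, ∃ p m, n p m = k

variable {n : ℕ → ℕ → ℕ} {e : ℕ → ℕ → ℕ → (H →L[ℂ] H)}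

lemma IsTower.succ_mul (h : IsTower n e) (p i a m c b : ℕ) :
    e (p + 1) b c * e p (n a m) i = if a = c then e p (n b m) i else 0 := by
  have := congrArg star (h.mul_succ p i a m c b)
  rw [star_mul, (h.units _).star_eq, (h.units _).star_eq] at this
  rw [this]
  split_ifs
  · exact (h.units _).star_eq _ _
  · exact star_zero _

/-- The source projection of `e q i j` lies below exactly one diagonal unit `e (q + d) c c` of
each higher level. -/
lemma IsTower.exists_mul_add (h : IsTower n e) (q j d : ℕ) :
    ∃ (c : ℕ) (g : ℕ → ℕ), g c = j ∧
      ∀ i a b, e q i j * e (q + d) a b = if c = a then e q i (g b) else 0 := by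
  induction d with
  | zero => exact ⟨j, id, rfl, fun i a b => (h.units q).mul _ _ _ _⟩
  | succ d ih =>
    obtain ⟨c, g, hg, hc⟩ := ih
    obtain ⟨c', m, hm⟩ := h.cover c
    refine ⟨c', fun b => g (n b m), by simp [hm, hg], fun i a b => ?_⟩
    have h1 : e q i j = e q i j * e (q + d) c c := by rw [hc, if_pos rfl, hg]
    rw [h1, mul_assoc, ← add_assoc]
    nth_rewrite 2 [← hm]
    rw [h.mul_succ]
    split_ifs
    · rw [hc, if_pos rfl]
    · simp

lemma IsTower.mul_mem_unitSpan (h : IsTower n e) {q p : ℕ} (hqp : q ≤ p) {x y : H →L[ℂ] H}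
    (hx : x ∈ unitSpan (e q)) (hy : y ∈ unitSpan (e p)) : x * y ∈ unitSpan (e q) := by
  obtain ⟨d, rfl⟩ := Nat.exists_eq_add_of_le hqp
  refine mul_mem_of_unitSpan (isClosed_unitSpan _) (fun i j k l => ?_) hx hy
  obtain ⟨c, g, -, hc⟩ := h.exists_mul_add q j d
  rw [hc]
  split_ifs
  · exact mem_unitSpan _ _ _
  · exact zero_mem _

/-! ### Decay along the diagonal and the norm estimate -/

/-- The operators `a` with `‖a * E c c‖ → 0` as `c → ∞`. -/
def decaySubmodule (E : ℕ → ℕ → (H →L[ℂ] H)) : Submodule ℂ (H →L[ℂ] H) where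
  carrier := {a | Tendsto (fun c => a * E c c) atTop (nhds 0)}
  add_mem' {a b} ha hb := by
    simpa [add_mul] using Filter.Tendsto.add ha hb
  zero_mem' := by simp
  smul_mem' r a ha := by
    simpa using Filter.Tendsto.const_smul ha r

lemma isClosed_decaySubmodule {E : ℕ → ℕ → (H →L[ℂ] H)} (hE : IsMatrixUnits E) :
    IsClosed (decaySubmodule E : Set (H →L[ℂ] H)) := by
  refine isClosed_of_closure_subset fun a ha => ?_
  change Tendsto (fun c => a * E c c) atTop (nhds 0)
  rw [Metric.tendsto_atTop]
  intro ε hε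
  obtain ⟨b, hb, hab⟩ := Metric.mem_closure_iff.1 ha (ε / 2) (by positivity)
  obtain ⟨N, hN⟩ := Metric.tendsto_atTop.1 hb (ε / 2) (by positivity)
  refine ⟨N, fun c hc => ?_⟩
  have h1 := hN c hc
  rw [dist_zero_right] at h1 ⊢
  rw [dist_eq_norm] at hab
  have h2 : ‖E c c‖ ≤ 1 := by simpa using hE.norm_sum_diag_le {c}
  have h3 : ‖(a - b) * E c c‖ ≤ ‖a - b‖ :=
    (norm_mul_le _ _).trans (mul_le_of_le_one_right (norm_nonneg _) h2)
  calc ‖a * E c c‖ = ‖(a - b) * E c c + b * E c c‖ := by rw [sub_mul, sub_add_cancel]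
    _ ≤ ‖(a - b) * E c c‖ + ‖b * E c c‖ := norm_add_le _ _
    _ < ε := by linarith

lemma IsTower.unitSpan_le_decay (h : IsTower n e) {q p : ℕ} (hqp : q ≤ p) :
    unitSpan (e q) ≤ decaySubmodule (e p) := by
  obtain ⟨d, rfl⟩ := Nat.exists_eq_add_of_le hqp
  refine unitSpan_le (isClosed_decaySubmodule (h.units _)) fun i j => ?_
  obtain ⟨c, g, -, hc⟩ := h.exists_mul_add q j d
  change Tendsto _ _ _
  refine tendsto_const_nhds.congr' ?_
  filter_upwards [Filter.eventually_gt_atTop c] with a ha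
  rw [hc, if_neg ha.ne]

/-- Cutting `x` down by `P m = ∑ i, e p (n i m) (n i m)` keeps its norm, whereas `a * P m → 0`. -/
lemma IsTower.norm_le (h : IsTower n e) {p : ℕ} {x a : H →L[ℂ] H}
    (ha : a ∈ decaySubmodule (e p)) (hx : x ∈ unitSpan (e (p + 1))) : ‖x‖ ≤ ‖x + a‖ := by
  have hcl : IsClosed {x : H →L[ℂ] H | ‖x‖ ≤ ‖x + a‖} :=
    isClosed_le continuous_norm (continuous_id.add continuous_const).norm
  refine closure_minimal (fun x hx => ?_) hcl hx
  obtain ⟨c, rfl⟩ := Finsupp.mem_span_range_iff_exists_finsupp.1 hx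
  let s : Finset ℕ := c.support.image Prod.fst ∪ c.support.image Prod.snd
  have hs : c.support ⊆ s ×ˢ s := by
    intro q hq
    have h1 : q.1 ∈ s := Finset.mem_union_left _ (Finset.mem_image_of_mem _ hq)
    have h2 : q.2 ∈ s := Finset.mem_union_right _ (Finset.mem_image_of_mem _ hq)
    exact Finset.mem_product.2 ⟨h1, h2⟩
  have hxs : (c.sum fun q r => r • e (p + 1) q.1 q.2)
      = ∑ i : s, ∑ j : s, c (i, j) • e (p + 1) i j := by
    rw [Finsupp.sum_of_support_subset _ hs _ (by simp), Finset.sum_product]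
    rw [← Finset.sum_coe_sort s]
    exact Finset.sum_congr rfl fun i _ =>
      (Finset.sum_coe_sort s (fun j => c (i, j) • e (p + 1) i j)).symm
  change ‖c.sum _‖ ≤ ‖c.sum _ + a‖
  rw [hxs]
  set x := ∑ i : s, ∑ j : s, c (i, j) • e (p + 1) i j with hx_def
  have hninj : ∀ m, Function.Injective fun i : s => n i m := fun m i j hij => by
    by_contra hne
    exact h.disj i j (fun h => hne (Subtype.ext h)) m m hij
  have hQ : ∀ m, IsMatrixUnits fun i j : s => e p (n i m) (n j m) := fun m =>
    (h.units p).comp_injective (hninj m)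
  have hF : IsMatrixUnits fun i j : s => e (p + 1) i j :=
    (h.units (p + 1)).comp_injective Subtype.val_injective
  let P : ℕ → (H →L[ℂ] H) := fun m => ∑ i : s, e p (n i m) (n i m)
  have hP : ∀ m, ‖P m‖ ≤ 1 := fun m => (hQ m).norm_sum_diag_le Finset.univ
  have hxP : ∀ m, x * P m = ∑ i : s, ∑ j : s, c (i, j) • e p (n i m) (n j m) := by
    intro m
    simp only [hx_def, P, Finset.sum_mul]
    refine Finset.sum_congr rfl fun i _ => Finset.sum_congr rfl fun j _ => ?_
    rw [Finset.mul_sum, Finset.sum_eq_single j]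
    · rw [smul_mul_assoc, h.succ_mul, if_pos rfl]
    · intro k _ hk
      rw [smul_mul_assoc, h.succ_mul, if_neg (fun h => hk (Subtype.ext h)), smul_zero]
    · simp
  have hnorm : ∀ m, ‖x * P m‖ = ‖x‖ := fun m => by
    rw [hxP]
    exact (hQ m).norm_sum_eq hF fun i j => c (i, j)
  have haP : Tendsto (fun m => ‖a * P m‖) atTop (nhds 0) := by
    have : Tendsto (fun m => ∑ i : s, a * e p (n i m) (n i m)) atTop (nhds (∑ i : s, 0)) :=
      tendsto_finsetSum _ fun i _ =>
        Filter.Tendsto.comp (g := fun c => a * e p c c) ha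
          (Nat.cofinite_eq_atTop ▸ (h.inj i).tendsto_cofinite)
    simp only [Finset.sum_const_zero, ← Finset.mul_sum] at this
    exact tendsto_zero_iff_norm_tendsto_zero.1 this
  have hle : ∀ m, ‖x‖ ≤ ‖x + a‖ + ‖a * P m‖ := fun m => by
    calc ‖x‖ = ‖(x + a) * P m - a * P m‖ := by rw [add_mul, add_sub_cancel_right, hnorm]
      _ ≤ ‖(x + a) * P m‖ + ‖a * P m‖ := norm_sub_le _ _
      _ ≤ ‖x + a‖ + ‖a * P m‖ := by
        gcongr
        exact (norm_mul_le _ _).trans (mul_le_of_le_one_right (norm_nonneg _) (hP m))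
  simpa using ge_of_tendsto' (haP.const_add ‖x + a‖) hle

end Tower

/-! ### Compact operators -/

section Compact

variable {H : Type*} [NormedAddCommGroup H] [InnerProductSpace ℂ H] [CompleteSpace H]

open InnerProductSpace

lemma rankOne_mem_unitSpan (ξ : HilbertBasis ℕ ℂ H) {e : ℕ → ℕ → ℕ → (H →L[ℂ] H)}
    (h0 : ∀ i j k, e 0 i j (ξ k) = if k = j then ξ i else 0) (i : ℕ) (w : H) :
    rankOne ℂ (ξ i) w ∈ unitSpan (e 0) := by
  have h1 := (ξ.hasSum_repr w).map (rankOne ℂ (ξ i)) (rankOne ℂ (ξ i)).continuous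
  refine (isClosed_unitSpan (e 0)).mem_of_tendsto h1 (Filter.Eventually.of_forall fun s => ?_)
  refine Submodule.sum_mem _ fun k _ => ?_
  rw [Function.comp_apply, map_smulₛₗ, ← e_zero_eq_rankOne ξ h0]
  exact Submodule.smul_mem _ _ (mem_unitSpan _ _ _)

/-- The compact operators are the closed span of the matrix units `e 0 i j`. A compact `a` is
the norm limit of `(∑ i < N, e 0 i i) * a`, because the projections `∑ i < N, e 0 i i` converge
strongly to `1`, hence uniformly on the relatively compact image of the unit ball. -/
lemma isCompactOperator_iff_mem_unitSpan (ξ : HilbertBasis ℕ ℂ H)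
    {e : ℕ → ℕ → ℕ → (H →L[ℂ] H)}
    (h0 : ∀ i j k, e 0 i j (ξ k) = if k = j then ξ i else 0) (a : H →L[ℂ] H) :
    IsCompactOperator a ↔ a ∈ unitSpan (e 0) := by
  constructor
  · intro ha
    let P : ℕ → (H →L[ℂ] H) := fun N => ∑ i ∈ Finset.range N, e 0 i i
    have hP : ∀ N, ‖P N‖ ≤ 1 := fun N => (isMatrixUnits_zero ξ h0).norm_sum_diag_le _
    have hPa : ∀ N, P N * a ∈ unitSpan (e 0) := fun N => by
      rw [Finset.sum_mul]
      refine Submodule.sum_mem _ fun i _ => ?_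
      rw [e_zero_eq_rankOne ξ h0, ContinuousLinearMap.mul_def, rankOne_comp]
      exact rankOne_mem_unitSpan ξ h0 i _
    have hPv : ∀ v, Tendsto (fun N => P N v) atTop (nhds v) := fun v => by
      refine (ξ.hasSum_repr v).tendsto_sum_nat.congr fun N => ?_
      simp [P, e_zero_eq_rankOne ξ h0, ξ.repr_apply_apply]
    rw [← SetLike.mem_coe, ← (isClosed_unitSpan (e 0)).closure_eq, Metric.mem_closure_iff]
    intro ε hε
    have hcomp : IsCompact (closure (a '' Metric.closedBall 0 1)) :=
      IsCompactOperator.isCompact_closure_image_closedBall (f := (a : H →ₗ[ℂ] H)) ha 1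
    obtain ⟨t, htf, ht⟩ := Metric.totallyBounded_iff.1 hcomp.totallyBounded (ε / 6) (by positivity)
    have hev : ∀ᶠ N in atTop, ∀ y ∈ t, dist (P N y) y < ε / 6 :=
      (Filter.eventually_all_finite htf).2 fun y _ =>
        (Metric.tendsto_nhds.1 (hPv y)) _ (by positivity)
    obtain ⟨N, hN⟩ := hev.exists
    refine ⟨P N * a, hPa N, ?_⟩
    rw [dist_eq_norm]
    refine lt_of_le_of_lt (b := ε / 2) ?_ (by linarith)
    refine ContinuousLinearMap.opNorm_le_of_unit_norm (by positivity) fun v hv => ?_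
    have hav : a v ∈ closure (a '' Metric.closedBall 0 1) :=
      subset_closure ⟨v, by simp [hv], rfl⟩
    obtain ⟨y, hy, hay⟩ := Set.mem_iUnion₂.1 (ht hav)
    have h1 : ‖a v - y‖ < ε / 6 := by rwa [← dist_eq_norm]
    have h2 : ‖P N y - y‖ < ε / 6 := by
      rw [← dist_eq_norm]
      exact hN y hy
    have h3 : ‖P N (a v - y)‖ ≤ ‖a v - y‖ := by
      simpa using (P N).le_of_opNorm_le (hP N) (a v - y)
    have h4 : (a - P N * a) v = (a v - y) - (P N y - y) - P N (a v - y) := by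
      rw [map_sub, sub_apply, mul_apply_eq_comp]
      abel
    rw [h4]
    have h5 := norm_sub_le ((a v - y) - (P N y - y)) (P N (a v - y))
    have h6 := norm_sub_le (a v - y) (P N y - y)
    linarith
  · intro ha
    have : unitSpan (e 0) ≤ compactOperator (RingHom.id ℂ) H H := by
      refine unitSpan_le isClosed_setOfPred_isCompactOperator fun i j => ?_
      change IsCompactOperator _
      rw [e_zero_eq_rankOne ξ h0, rankOne_def']
      have hc : IsCompactOperator (ContinuousLinearMap.toSpanSingleton ℂ (ξ i)) :=
        isCompactOperator_of_locallyCompactSpace_rng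
          (ContinuousLinearMap.toSpanSingleton ℂ (ξ i))
      exact hc.comp_clm (innerSL ℂ (ξ j))
    exact this ha

end Compact

/-! ### Induction on the level -/

section Main

variable {H : Type*} [NormedAddCommGroup H] [InnerProductSpace ℂ H] [CompleteSpace H]

/-- If the norm on `K` is dominated by the norm modulo `S`, then `S + K` is closed. -/
lemma isClosed_add_of_norm_le {S K : Submodule ℂ (H →L[ℂ] H)}
    (hS : IsClosed (S : Set (H →L[ℂ] H))) (hK : IsClosed (K : Set (H →L[ℂ] H)))
    (h : ∀ a ∈ S, ∀ x ∈ K, ‖x‖ ≤ ‖x + a‖) :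
    IsClosed ((S : Set (H →L[ℂ] H)) + (K : Set (H →L[ℂ] H))) := by
  refine isClosed_of_closure_subset fun y hy => ?_
  obtain ⟨u, hu, huy⟩ := mem_closure_iff_seq_limit.1 hy
  choose a ha x hx hax using fun k => Set.mem_add.1 (hu k)
  have hdist : ∀ k l, dist (x k) (x l) ≤ dist (u k) (u l) := fun k l => by
    rw [dist_eq_norm, dist_eq_norm, ← hax, ← hax]
    refine (h (a k - a l) (S.sub_mem (ha k) (ha l)) _ (K.sub_mem (hx k) (hx l))).trans_eq ?_
    congr 1
    abel
  have hcau : CauchySeq x := by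
    rw [Metric.cauchySeq_iff]
    intro ε hε
    obtain ⟨N, hN⟩ := Metric.cauchySeq_iff.1 huy.cauchySeq ε hε
    exact ⟨N, fun k hk l hl => (hdist k l).trans_lt (hN k hk l hl)⟩
  obtain ⟨z, hz⟩ := cauchySeq_tendsto_of_complete hcau
  have haz : Tendsto a atTop (nhds (y - z)) :=
    (huy.sub hz).congr fun k => by rw [← hax, add_sub_cancel_right]
  exact Set.mem_add.2 ⟨y - z, hS.mem_of_tendsto haz (Filter.Eventually.of_forall ha), z,
    hK.mem_of_tendsto hz (Filter.Eventually.of_forall hx), sub_add_cancel _ _⟩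

/-- The induction on `l`. Right multiplication by every later `K_p` and decay at every later level
are carried along, since they are what the next steps use. -/
lemma IsTower.exists_subalgebra {n : ℕ → ℕ → ℕ} {e : ℕ → ℕ → ℕ → (H →L[ℂ] H)}
    (h : IsTower n e) (hA0 : Aset e 0 = unitSpan (e 0)) (l : ℕ) :
    ∃ S : NonUnitalStarSubalgebra ℂ (H →L[ℂ] H), (S : Set (H →L[ℂ] H)) = Aset e l ∧
      IsClosed (S : Set (H →L[ℂ] H)) ∧
      (∀ p, l ≤ p → ∀ a ∈ S, ∀ x ∈ unitSpan (e p), a * x ∈ S) ∧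
      (∀ p, l ≤ p → ∀ a ∈ S, a ∈ decaySubmodule (e p)) := by
  induction l with
  | zero =>
    refine ⟨{ unitSpan (e 0) with
      mul_mem' := (h.units 0).mul_mem
      star_mem' := (h.units 0).star_mem }, hA0.symm, isClosed_unitSpan _, ?_, ?_⟩
    · exact fun p hp a ha x hx => h.mul_mem_unitSpan hp ha hx
    · exact fun p hp a ha => h.unitSpan_le_decay hp ha
  | succ l ih =>
    obtain ⟨S, hS, hScl, hSmul, hSdec⟩ := ih
    let S' : Submodule ℂ (H →L[ℂ] H) := S.toNonUnitalSubalgebra.toSubmodule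
    let K := unitSpan (e (l + 1))
    have hmulK : ∀ a ∈ S, ∀ x ∈ K, x * a ∈ S := fun a ha x hx => by
      have := star_mem (hSmul (l + 1) l.le_succ _ (star_mem ha) _ ((h.units _).star_mem hx))
      simpa using this
    have hmem : ∀ x, x ∈ S' ⊔ K ↔ ∃ a ∈ S, ∃ y ∈ K, a + y = x := fun x => Submodule.mem_sup
    let T : NonUnitalStarSubalgebra ℂ (H →L[ℂ] H) :=
      { S' ⊔ K with
        mul_mem' := by
          intro x y hx hy
          obtain ⟨a, ha, u, hu, rfl⟩ := (hmem x).1 hx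
          obtain ⟨b, hb, v, hv, rfl⟩ := (hmem y).1 hy
          refine (hmem _).2 ⟨a * b + a * v + u * b, ?_, u * v, (h.units _).mul_mem hu hv, ?_⟩
          · exact add_mem (add_mem (mul_mem ha hb) (hSmul _ l.le_succ _ ha _ hv))
              (hmulK b hb u hu)
          · rw [add_mul, mul_add, mul_add]
            abel
        star_mem' := by
          intro x hx
          obtain ⟨a, ha, u, hu, rfl⟩ := (hmem x).1 hx
          exact (hmem _).2 ⟨star a, star_mem ha, star u, (h.units _).star_mem hu,
            (star_add a u).symm⟩ }
    have hT : ∀ x, x ∈ T ↔ ∃ a ∈ S, ∃ y ∈ K, a + y = x := hmem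
    have hTset : (T : Set (H →L[ℂ] H)) = (S' : Set (H →L[ℂ] H)) + (K : Set (H →L[ℂ] H)) :=
      Submodule.coe_sup S' K
    refine ⟨T, ?_, ?_, ?_, ?_⟩
    · rw [hTset, Aset, ← hS, Kset_eq (h.units (l + 1))]
      rfl
    · rw [hTset]
      exact isClosed_add_of_norm_le hScl (isClosed_unitSpan _) fun a ha x hx =>
        h.norm_le (hSdec l le_rfl a ha) hx
    · intro p hp y hy x hx
      obtain ⟨a, ha, u, hu, rfl⟩ := (hT _).1 hy
      exact (hT _).2 ⟨a * x, hSmul p (l.le_succ.trans hp) a ha x hx, u * x, h.mul_mem_unitSpan hp hu hx,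
        (add_mul _ _ _).symm⟩
    · intro p hp y hy
      obtain ⟨a, ha, u, hu, rfl⟩ := (hT _).1 hy
      exact add_mem (hSdec p (l.le_succ.trans hp) a ha) (h.unitSpan_le_decay hp hu)

end Main

/-- for every `l ≥ 1`, `A_l = A_{l-1} + K_l` is a closed `*`-subalgebra of
`B(H)` and `A_{l-1}` is a closed two-sided ideal of `A_l`. -/
theorem Al_CStarSubalgebra_and_ideal
    {H : Type*} [NormedAddCommGroup H] [InnerProductSpace ℂ H] [CompleteSpace H]
    (ξ : HilbertBasis ℕ ℂ H)
    (n : ℕ → ℕ → ℕ) (hmono : ∀ p, StrictMono (n p))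
    (hdisj : ∀ p q, p ≠ q → ∀ k m, n p k ≠ n q m)
    (hcover : ∀ k, ∃ p m, n p m = k)
    (e : ℕ → ℕ → ℕ → (H →L[ℂ] H))
    (h0 : ∀ i j k, e 0 i j (ξ k) = if k = j then ξ i else 0)
    (hrec : ∀ p i j, ∀ v : H, Filter.Tendsto
      (fun M => ∑ m ∈ Finset.range M, e p (n i m) (n j m) v)
      Filter.atTop (nhds (e (p + 1) i j v)))
    :
    ∀ l : ℕ, 1 ≤ l →
      (∃ S : NonUnitalStarSubalgebra ℂ (H →L[ℂ] H),
        (S : Set (H →L[ℂ] H)) = Aset e l ∧ IsClosed (Aset e l)) ∧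
      IsClosed (Aset e (l - 1)) ∧
      (∀ x ∈ Aset e l, ∀ a ∈ Aset e (l - 1),
        x * a ∈ Aset e (l - 1) ∧ a * x ∈ Aset e (l - 1)) := by
  have hunits : ∀ p, IsMatrixUnits (e p) := fun p => by
    induction p with
    | zero => exact isMatrixUnits_zero ξ h0
    | succ p ih => exact isMatrixUnits_succ hmono hdisj hrec ih
  have h : IsTower n e :=
    { units := hunits
      mul_succ := fun p => mul_succ hmono hdisj hrec (hunits p)
      inj := fun p => (hmono p).injective
      disj := hdisj
      cover := hcover }
  have hA0 : Aset e 0 = unitSpan (e 0) := by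
    ext a
    exact isCompactOperator_iff_mem_unitSpan ξ h0 a
  rintro (_ | l) hl
  · omega
  obtain ⟨T, hT, hTcl, -, -⟩ := h.exists_subalgebra hA0 (l + 1)
  obtain ⟨S, hS, hScl, hSmul, -⟩ := h.exists_subalgebra hA0 l
  refine ⟨⟨T, hT, hT ▸ hTcl⟩, ?_, ?_⟩
  · rw [Nat.add_sub_cancel, ← hS]
    exact hScl
  · intro x hx a ha
    rw [Nat.add_sub_cancel, ← hS] at ha ⊢
    rw [Aset, ← hS, Kset_eq (hunits (l + 1))] at hx
    obtain ⟨b, hb, y, hy, rfl⟩ := Set.mem_add.1 hx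
    have hya : y * a ∈ S := by
      have := star_mem (hSmul (l + 1) l.le_succ _ (star_mem ha) _ ((hunits _).star_mem hy))
      simpa using this
    constructor
    · rw [add_mul]
      exact add_mem (mul_mem hb ha) hya
    · rw [mul_add]
      exact add_mem (mul_mem ha hb) (hSmul (l + 1) l.le_succ a ha y hy)
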